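/- Assume condition (C) and fix K ∈ (K₀,K_M). Then: (1) for every ε > 0 there is δ > 0 such that whenever c ∈ (c_M(K) − δ, c_M(K)) with (K,c) ∈ D₁ and (u,w) is a solution of (TV) with parameter μ satisfying (HO) with level ū = u₁(K,c), one has |μ| < ε and sup_{z∈ℝ} |(u(z),w(z)) − (u_M(K),0)| < ε; (2) for every ε > 0 there is δ > 0 such that whenever c ∈ (c_m(K), c_m(K) + δ) with (K,c) ∈ D₁ ∪ D₂ and (u,w) is a solution of (TV) with parameter μ satisfying (HO) with level ū = u₂(K,c), one has |μ| < ε and sup_{z∈ℝ} |(u(z),w(z)) − (u_m(K),0)| < ε. Equivalently, μ¹_pul(K,c) → 0 and the homoclinic orbit at u₁ converges in Hausdorff distance to the single point {(u_M(K),0)} as c → c_M(K), and μ²_pul(K,c) → 0 and the homoclinic orbit at u₂ converges in Hausdorff distance to {(u_m(K),0)} as c → c_m(K). -/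

import Mathlib

open Set Filter MeasureTheory

noncomputable section

namespace TrafficTW

/-- `f(u) = (K u - V(u) - c)/K`. -/
def fTV (V : ℝ → ℝ) (K c u : ℝ) : ℝ := (K * u - V u - c) / K

/-- `f'(u) = (K - V'(u))/K`. -/
def fdTV (V' : ℝ → ℝ) (K u : ℝ) : ℝ := (K - V' u) / K

/-- `h(u,μ) = f'(u) + μ`. -/
def hTV (V' : ℝ → ℝ) (K μ u : ℝ) : ℝ := fdTV V' K u + μ

/-- `g₁(u) = 1/(τ κ(1/u))`. -/
def g1TV (κ : ℝ → ℝ) (τ u : ℝ) : ℝ := 1 / (τ * κ (1 / u))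

/-- `g₂(u) = u/(2 τ κ(1/u))`. -/
def g2TV (κ : ℝ → ℝ) (τ u : ℝ) : ℝ := u / (2 * τ * κ (1 / u))

/-- The traveling-wave system (TV): `u' = w`, `w' = g₁ f + g₂ h w`. -/
def IsTVSol (V V' κ : ℝ → ℝ) (τ K c μ : ℝ) (u w : ℝ → ℝ) : Prop :=
  (∀ z, HasDerivAt u (w z) z) ∧
  (∀ z, HasDerivAt w
    (g1TV κ τ (u z) * fTV V K c (u z) + g2TV κ τ (u z) * hTV V' K μ (u z) * w z) z)

/-- Assumption (A1), where `V'` and `V''` are the first and second derivatives of `V`. -/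
def A1 (V V' V'' : ℝ → ℝ) (UM : ℝ) : Prop :=
  (∀ u ∈ Ici (0:ℝ), HasDerivWithinAt V (V' u) (Ici 0) u) ∧
  ContinuousOn V' (Ici 0) ∧
  (∀ u ∈ Ioi (0:ℝ), HasDerivAt V' (V'' u) u) ∧
  ContinuousOn V'' (Ioi 0) ∧
  (∀ u, 0 < u → 0 < V' u) ∧ (∃ M, ∀ u, 0 < u → V' u ≤ M) ∧
  Tendsto V' atTop (nhds 0) ∧
  0 < UM ∧ (∀ u, 0 < u → V' u ≤ V' UM) ∧
  (∀ u, 0 < u → (V'' u = 0 ↔ u = UM))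

/-- Assumption (A2). -/
def A2 (κ : ℝ → ℝ) : Prop :=
  ContDiffOn ℝ 1 κ (Ioi 0) ∧ ∀ ρ, 0 < ρ → 0 < κ ρ

/-- `c₀ = -V(0)`. -/
def c0v (V : ℝ → ℝ) : ℝ := - V 0

/-- `c_M(K) = K u_M(K) - V(u_M(K))`, where `uMx` is the function `K ↦ u_M(K)`. -/
def cMf (V : ℝ → ℝ) (uMx : ℝ → ℝ) (K : ℝ) : ℝ := K * uMx K - V (uMx K)

/-- `c_m(K) = K u_m(K) - V(u_m(K))`, where `umx` is the function `K ↦ u_m(K)`. -/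
def cmf (V : ℝ → ℝ) (umx : ℝ → ℝ) (K : ℝ) : ℝ := K * umx K - V (umx K)

/-- `c₁(K) = max (c₀, c_m(K))`. -/
def c1f (V : ℝ → ℝ) (umx : ℝ → ℝ) (K : ℝ) : ℝ := max (c0v V) (cmf V umx K)

/-- `uMx K = u_M(K)` is the unique local maximum point of `u ↦ K u - V(u)`, characterized
by `u_M(K) ∈ (0, U_M)` and `V'(u_M(K)) = K`, for `K ∈ (K₀, K_M)`. -/
def UMaxHyp (V' : ℝ → ℝ) (UM : ℝ) (uMx : ℝ → ℝ) : Prop :=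
  ∀ K, V' 0 < K → K < V' UM → uMx K ∈ Ioo 0 UM ∧ V' (uMx K) = K

/-- `umx K = u_m(K)` is the unique local minimum point of `u ↦ K u - V(u)`, characterized
by `u_m(K) ∈ (U_M, ∞)` and `V'(u_m(K)) = K`, for `K ∈ (0, K_M)`. -/
def UMinHyp (V' : ℝ → ℝ) (UM : ℝ) (umx : ℝ → ℝ) : Prop :=
  ∀ K, 0 < K → K < V' UM → UM < umx K ∧ V' (umx K) = K

/-- Characterization of `K₁ ∈ (K₀, K_M)`: `c_m(K) < c₀` for `K < K₁` and `c_m(K) > c₀`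
for `K > K₁`. -/
def K1Hyp (V V' : ℝ → ℝ) (UM : ℝ) (umx : ℝ → ℝ) (K₁ : ℝ) : Prop :=
  V' 0 < K₁ ∧ K₁ < V' UM ∧
  (∀ K, 0 < K → K < K₁ → cmf V umx K < c0v V) ∧
  cmf V umx K₁ = c0v V ∧
  (∀ K, K₁ < K → K < V' UM → c0v V < cmf V umx K)

/-- The parameter region `D₁`. -/
def D1 (V V' : ℝ → ℝ) (UM : ℝ) (uMx umx : ℝ → ℝ) : Set (ℝ × ℝ) :=
  {p | V' 0 < p.1 ∧ p.1 < V' UM ∧ c1f V umx p.1 < p.2 ∧ p.2 < cMf V uMx p.1}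

/-- The parameter region `D₂`. -/
def D2 (V V' : ℝ → ℝ) (umx : ℝ → ℝ) (K₁ : ℝ) : Set (ℝ × ℝ) :=
  {p | (V' 0 < p.1 ∧ p.1 < K₁ ∧ p.2 = c0v V) ∨
       (0 < p.1 ∧ p.1 < K₁ ∧ cmf V umx p.1 < p.2 ∧ p.2 < c0v V)}

/-- For `(K,c) ∈ D₁`: `u₁ < u₀ < u₂` are the exactly three positive zeros of `f`. -/
def ZerosD1 (V : ℝ → ℝ) (K c u1 u0 u2 : ℝ) : Prop :=
  0 < u1 ∧ u1 < u0 ∧ u0 < u2 ∧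
  fTV V K c u1 = 0 ∧ fTV V K c u0 = 0 ∧ fTV V K c u2 = 0 ∧
  ∀ u, 0 < u → fTV V K c u = 0 → u = u1 ∨ u = u0 ∨ u = u2

/-- For `(K,c) ∈ D₂`: `u₀ < u₂` are the exactly two positive zeros of `f`. -/
def ZerosD2 (V : ℝ → ℝ) (K c u0 u2 : ℝ) : Prop :=
  0 < u0 ∧ u0 < u2 ∧ fTV V K c u0 = 0 ∧ fTV V K c u2 = 0 ∧
  ∀ u, 0 < u → fTV V K c u = 0 → u = u0 ∨ u = u2

/-- Condition (HE1). -/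
def HE1 (u1 u2 : ℝ) (u w : ℝ → ℝ) : Prop :=
  Tendsto u atBot (nhds u1) ∧ Tendsto u atTop (nhds u2) ∧
  Tendsto w atBot (nhds 0) ∧ Tendsto w atTop (nhds 0) ∧ ∀ z, 0 < w z

/-- Condition (HE2). -/
def HE2 (u1 u2 : ℝ) (u w : ℝ → ℝ) : Prop :=
  Tendsto u atBot (nhds u2) ∧ Tendsto u atTop (nhds u1) ∧
  Tendsto w atBot (nhds 0) ∧ Tendsto w atTop (nhds 0) ∧ ∀ z, w z < 0

/-- Condition (HO) with level `ub`. -/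
def HO (ub : ℝ) (u w : ℝ → ℝ) : Prop :=
  Tendsto u atBot (nhds ub) ∧ Tendsto u atTop (nhds ub) ∧
  Tendsto w atBot (nhds 0) ∧ Tendsto w atTop (nhds 0) ∧
  ¬ (∀ z, u z = ub ∧ w z = 0)

/-- (TV) with parameter `μ` has a positive solution satisfying (HE1). -/
def HasHE1 (V V' κ : ℝ → ℝ) (τ K c μ u1 u2 : ℝ) : Prop :=
  ∃ u w : ℝ → ℝ, IsTVSol V V' κ τ K c μ u w ∧ (∀ z, 0 < u z) ∧ HE1 u1 u2 u w

/-- (TV) with parameter `μ` has a positive solution satisfying (HE2). -/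
def HasHE2 (V V' κ : ℝ → ℝ) (τ K c μ u1 u2 : ℝ) : Prop :=
  ∃ u w : ℝ → ℝ, IsTVSol V V' κ τ K c μ u w ∧ (∀ z, 0 < u z) ∧ HE2 u1 u2 u w

/-- (TV) with parameter `μ` has a positive solution satisfying (HO) with level `ub`. -/
def HasHO (V V' κ : ℝ → ℝ) (τ K c μ ub : ℝ) : Prop :=
  ∃ u w : ℝ → ℝ, IsTVSol V V' κ τ K c μ u w ∧ (∀ z, 0 < u z) ∧ HO ub u w

/-- Condition (H): `∫₁^∞ dρ/(ρ³ κ(ρ)) = ∞`. -/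
def CondH (κ : ℝ → ℝ) : Prop :=
  ¬ IntegrableOn (fun ρ => 1 / (ρ ^ 3 * κ ρ)) (Ioi 1)

/-- Condition (C). -/
def CondC (V' κ : ℝ → ℝ) (UM K₁ K : ℝ) : Prop :=
  (K₁ < K ∧ K < V' UM) ∨ (CondH κ ∧ V' 0 < K ∧ K ≤ K₁)

/-- Periodic solution. -/
def IsPeriodicSol (u w : ℝ → ℝ) : Prop :=
  ∃ Z, 0 < Z ∧ ∀ z, u (z + Z) = u z ∧ w (z + Z) = w z

/-- Nonconstant pair of functions. -/
def Nonconst (u w : ℝ → ℝ) : Prop := ∃ z, u z ≠ u 0 ∨ w z ≠ w 0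

/-- Discriminant of the Jacobian at an equilibrium `(u,0)`. -/
def discTV (V' κ : ℝ → ℝ) (τ K u μ : ℝ) : ℝ :=
  (g2TV κ τ u) ^ 2 * (hTV V' K μ u) ^ 2 + 4 * g1TV κ τ u * fdTV V' K u

/-- The eigenvalue `λ₊(u)`. -/
def lamP (V' κ : ℝ → ℝ) (τ K u μ : ℝ) : ℝ :=
  (g2TV κ τ u * hTV V' K μ u + Real.sqrt (discTV V' κ τ K u μ)) / 2

/-- The eigenvalue `λ₋(u)`. -/
def lamM (V' κ : ℝ → ℝ) (τ K u μ : ℝ) : ℝ :=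
  (g2TV κ τ u * hTV V' K μ u - Real.sqrt (discTV V' κ τ K u μ)) / 2

/-- `Z` is the minimal period of `(u,w)`. -/
def IsMinPeriod (u w : ℝ → ℝ) (Z : ℝ) : Prop :=
  0 < Z ∧ (∀ z, u (z + Z) = u z ∧ w (z + Z) = w z) ∧
  ∀ Z', 0 < Z' → (∀ z, u (z + Z') = u z ∧ w (z + Z') = w z) → Z ≤ Z'

/-!
Along a homoclinic orbit the energy `w² / 2 - F(u)` has derivative `b(u) w²`, where `F' = a` is
the force and `b` the damping, and returns to its initial value. So the damping vanishes somewhere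
on the orbit: `μ = -f'(u(z))` for some `z`, and `μ` is small once the orbit is close to a critical
point of `f`.

Let `c` be close to the level `c_M(K)` of the peak. By the minimum principle a pulse at `u₁` stays
above `u₁`, which is close to the peak, so its speed is small as long as `u` is close to the peak.
By the maximum principle the force is nonpositive once `u` is past the peak. If `G' = b`, then
`w - G(u)` has derivative `a(u)`; it can lose only little while `u` makes an excursion above a
level slightly past the peak, because `w` is small and `G(u)` is the same at both ends. But
climbing to a fixed height above the peak takes a time bounded below, during which the force is
bounded away from zero. Hence for `c` close to `c_M(K)` the whole orbit is close to the peak.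
The trough is treated by the reflection `u ↦ -u`.
-/

section RealAnalysis

variable {f f' g : ℝ → ℝ} {C a b s t v : ℝ}

theorem sub_le_mul_sub_of_hasDerivAt (hst : s ≤ t) (hf : ∀ x, HasDerivAt f (f' x) x)
    (hf' : ∀ x ∈ Ioo s t, f' x ≤ C) : f t - f s ≤ C * (t - s) := by
  refine (convex_Icc s t).image_sub_le_mul_sub_of_deriv_le
    (fun x _ ↦ (hf x).continuousAt.continuousWithinAt)
    (fun x _ ↦ (hf x).differentiableAt.differentiableWithinAt) (fun x hx ↦ ?_)
    s (left_mem_Icc.2 hst) t (right_mem_Icc.2 hst) hst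
  rw [interior_Icc] at hx
  exact (hf x).deriv.trans_le (hf' x hx)

theorem le_of_hasDerivAt_nonpos (hst : s ≤ t) (hf : ∀ x, HasDerivAt f (f' x) x)
    (hf' : ∀ x ∈ Ioo s t, f' x ≤ 0) : f t ≤ f s := by
  simpa only [zero_mul, sub_nonpos] using sub_le_mul_sub_of_hasDerivAt hst hf hf'

theorem exists_last_eq (hg : Continuous g) (hab : a ≤ b) (ha : g a ≤ v) (hb : v ≤ g b) :
    ∃ s ∈ Icc a b, g s = v ∧ ∀ t ∈ Icc s b, v ≤ g t := by
  obtain ⟨x, hx, hxv⟩ := intermediate_value_Icc hab hg.continuousOn ⟨ha, hb⟩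
  have hcompact : IsCompact (Icc a b ∩ g ⁻¹' {v}) :=
    isCompact_Icc.inter_right (isClosed_singleton.preimage hg)
  obtain ⟨s, ⟨hs, hsv⟩, hlast⟩ := hcompact.exists_isGreatest ⟨x, hx, hxv⟩
  refine ⟨s, hs, hsv, fun t ht ↦ le_of_not_gt fun htv ↦ ?_⟩
  obtain ⟨y, hy, hyv⟩ := intermediate_value_Icc ht.2 hg.continuousOn ⟨htv.le, hb⟩
  have hys : y ≤ s := hlast ⟨⟨hs.1.trans (ht.1.trans hy.1), hy.2⟩, hyv⟩
  have hts : t = s := le_antisymm (hy.1.trans hys) ht.1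
  exact htv.ne (hts ▸ hsv)

theorem exists_first_eq (hg : Continuous g) (hab : a ≤ b) (ha : g a ≤ v) (hb : v ≤ g b) :
    ∃ t ∈ Icc a b, g t = v ∧ ∀ s ∈ Icc a t, g s ≤ v := by
  obtain ⟨s, hs, hsv, hlast⟩ := exists_last_eq (g := fun x ↦ -g (-x)) (v := -v) (by fun_prop)
    (neg_le_neg hab) (by simpa using hb) (by simpa using ha)
  refine ⟨-s, ⟨le_neg.1 hs.2, neg_le.1 hs.1⟩, neg_injective hsv, fun x hx ↦ ?_⟩
  simpa using hlast (-x) ⟨le_neg.1 hx.2, neg_le_neg hx.1⟩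

theorem exists_Icc_mapsTo_Icc {v₁ v₂ : ℝ} (hg : Continuous g) (hab : a ≤ b) (hv : v₁ ≤ v₂)
    (ha : g a ≤ v₁) (hb : v₂ ≤ g b) :
    ∃ s ∈ Icc a b, ∃ t ∈ Icc s b, g s = v₁ ∧ g t = v₂ ∧ MapsTo g (Icc s t) (Icc v₁ v₂) := by
  obtain ⟨s, hs, hsv, hlast⟩ := exists_last_eq hg hab ha (hv.trans hb)
  obtain ⟨t, ht, htv, hfirst⟩ := exists_first_eq hg hs.2 (hsv.trans_le hv) hb
  exact ⟨s, hs, t, ht, hsv, htv, fun x hx ↦ ⟨hlast x ⟨hx.1, hx.2.trans ht.2⟩, hfirst x hx⟩⟩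

theorem exists_hasDerivAt_of_continuousOn {J : Set ℝ} (hJo : IsOpen J) (hJ : J.OrdConnected)
    (hf : ContinuousOn f J) : ∃ F : ℝ → ℝ, ∀ x ∈ J, HasDerivAt F (f x) x := by
  rcases J.eq_empty_or_nonempty with rfl | ⟨m, hm⟩
  · exact ⟨0, fun x hx ↦ hx.elim⟩
  exact ⟨fun x ↦ ∫ t in m..x, f t, fun x hx ↦ intervalIntegral.integral_hasDerivAt_right
    (hf.mono (hJ.uIcc_subset hm hx)).intervalIntegrable
    (hf.stronglyMeasurableAtFilter hJo x hx) (hf.continuousAt (hJo.mem_nhds hx))⟩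

theorem strictMonoOn_or_strictAntiOn_of_hasDerivAt_ne_zero {D : Set ℝ} (hD : Convex ℝ D)
    (hf : ContinuousOn f D) (hf' : ∀ x ∈ interior D, HasDerivAt f (f' x) x)
    (hne : ∀ x ∈ interior D, f' x ≠ 0) : StrictMonoOn f D ∨ StrictAntiOn f D := by
  have hwithin := fun x hx ↦ (hf' x hx).hasDerivWithinAt (s := interior D)
  rcases hasDerivWithinAt_forall_lt_or_forall_gt_of_forall_ne hD.interior hwithin hne with h | h
  · exact .inr (strictAntiOn_of_hasDerivWithinAt_neg hD hf hwithin h)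
  · exact .inl (strictMonoOn_of_hasDerivWithinAt_pos hD hf hwithin h)

theorem eq_of_monotone_of_tendsto (hg : Monotone g)
    (hbot : Tendsto g atBot (nhds v)) (htop : Tendsto g atTop (nhds v)) (x : ℝ) : g x = v :=
  le_antisymm (hg.ge_of_tendsto htop x) (hg.le_of_tendsto hbot x)

theorem second_deriv_nonpos_of_forall_le {t₀ : ℝ} (hf : ∀ x, HasDerivAt f (g x) x)
    (hg : HasDerivAt g C t₀) (hmax : ∀ t, f t ≤ f t₀) : C ≤ 0 := by
  by_contra! hC
  have hderiv : deriv f = g := funext fun x ↦ (hf x).deriv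
  have hg₀ : g t₀ = 0 := IsLocalMax.hasDerivAt_eq_zero (.of_forall hmax) (hf t₀)
  have hmin : IsLocalMin f t₀ := isLocalMin_of_deriv_deriv_pos (by rwa [hderiv, hg.deriv])
    (by rw [hderiv, hg₀]) (hf t₀).continuousAt
  have hconst : f =ᶠ[nhds t₀] fun _ ↦ f t₀ := hmin.mono fun x hx ↦ le_antisymm (hmax x) hx
  have hg_eq : g =ᶠ[nhds t₀] fun _ ↦ 0 := by
    simpa only [hderiv, deriv_const'] using hconst.deriv
  exact hC.ne (((hasDerivAt_const t₀ 0).congr_of_eventuallyEq hg_eq).unique hg)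

end RealAnalysis

section Homoclinic

variable {a b u w G : ℝ → ℝ} {p q z : ℝ}

theorem HO.reverse (h : HO p u w) : HO p (fun z ↦ u (-z)) (fun z ↦ -w (-z)) := by
  obtain ⟨hu_bot, hu_top, hw_bot, hw_top, hne⟩ := h
  refine ⟨hu_top.comp tendsto_neg_atBot_atTop, hu_bot.comp tendsto_neg_atTop_atBot,
    by simpa using (hw_top.comp tendsto_neg_atBot_atTop).neg,
    by simpa using (hw_bot.comp tendsto_neg_atTop_atBot).neg, fun hrest ↦ hne fun z ↦ ?_⟩
  simpa using hrest (-z)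

theorem HO.reflect (h : HO p u w) : HO (-p) (fun z ↦ -u z) (fun z ↦ -w z) := by
  obtain ⟨hu_bot, hu_top, hw_bot, hw_top, hne⟩ := h
  refine ⟨hu_bot.neg, hu_top.neg, by simpa using hw_bot.neg, by simpa using hw_top.neg,
    fun hrest ↦ hne fun z ↦ ?_⟩
  simpa using hrest z

/-- `(u, w)` is a homoclinic orbit, to the rest point `(p, 0)`, of the planar system
`u' = w`, `w' = a(u) + b(u) w` with force `a` and damping `b`. -/
structure IsHomoclinic (a b : ℝ → ℝ) (p : ℝ) (u w : ℝ → ℝ) : Prop where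
  hasDerivAt_fst : ∀ z, HasDerivAt u (w z) z
  hasDerivAt_snd : ∀ z, HasDerivAt w (a (u z) + b (u z) * w z) z
  ho : HO p u w

namespace IsHomoclinic

theorem continuous_fst (h : IsHomoclinic a b p u w) : Continuous u :=
  continuous_iff_continuousAt.2 fun z ↦ (h.hasDerivAt_fst z).continuousAt

theorem continuous_snd (h : IsHomoclinic a b p u w) : Continuous w :=
  continuous_iff_continuousAt.2 fun z ↦ (h.hasDerivAt_snd z).continuousAt

theorem reverse (h : IsHomoclinic a b p u w) :
    IsHomoclinic a (fun x ↦ -b x) p (fun z ↦ u (-z)) (fun z ↦ -w (-z)) where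
  hasDerivAt_fst z :=
    ((h.hasDerivAt_fst (-z)).comp z (hasDerivAt_neg z)).congr_deriv (by ring)
  hasDerivAt_snd z :=
    ((h.hasDerivAt_snd (-z)).comp z (hasDerivAt_neg z)).neg.congr_deriv (by ring)
  ho := h.ho.reverse

theorem reflect (h : IsHomoclinic a b p u w) :
    IsHomoclinic (fun x ↦ -a (-x)) (fun x ↦ b (-x)) (-p) (fun z ↦ -u z) (fun z ↦ -w z) where
  hasDerivAt_fst z := (h.hasDerivAt_fst z).neg
  hasDerivAt_snd z := (h.hasDerivAt_snd z).neg.congr_deriv (by simp only [neg_neg]; ring)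
  ho := h.ho.reflect

theorem exists_forall_le_fst (h : IsHomoclinic a b p u w) (hz : p < u z) :
    ∃ z₀, (∀ t, u t ≤ u z₀) ∧ a (u z₀) ≤ 0 := by
  obtain ⟨hu_bot, hu_top, -⟩ := h.ho
  have hfar : ∀ᶠ t in cocompact ℝ, u t ≤ u z := by
    rw [cocompact_eq_atBot_atTop, eventually_sup]
    exact ⟨hu_bot.eventually_le_const hz, hu_top.eventually_le_const hz⟩
  obtain ⟨z₀, hmax⟩ := h.continuous_fst.exists_forall_ge' z hfar
  have hw₀ : w z₀ = 0 :=
    IsLocalMax.hasDerivAt_eq_zero (.of_forall hmax) (h.hasDerivAt_fst z₀)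
  refine ⟨z₀, hmax, ?_⟩
  simpa only [hw₀, mul_zero, add_zero] using
    second_deriv_nonpos_of_forall_le h.hasDerivAt_fst (h.hasDerivAt_snd z₀) hmax

theorem exists_forall_fst_le (h : IsHomoclinic a b p u w) (hz : u z < p) :
    ∃ z₀, (∀ t, u z₀ ≤ u t) ∧ 0 ≤ a (u z₀) := by
  obtain ⟨z₀, hmax, ha⟩ := h.reflect.exists_forall_le_fst (neg_lt_neg hz)
  exact ⟨z₀, fun t ↦ neg_le_neg_iff.1 (hmax t), by simpa using ha⟩

theorem exists_snd_ne_zero (h : IsHomoclinic a b p u w) : ∃ z, w z ≠ 0 := by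
  obtain ⟨-, hu_top, -, -, hne⟩ := h.ho
  by_contra! hw
  refine hne fun z ↦ ⟨?_, hw z⟩
  have hconst : u = fun _ ↦ u z := funext fun x ↦ is_const_of_deriv_eq_zero
    (fun y ↦ (h.hasDerivAt_fst y).differentiableAt)
    (fun y ↦ (h.hasDerivAt_fst y).deriv.trans (hw y)) x z
  rw [hconst] at hu_top
  exact tendsto_nhds_unique tendsto_const_nhds hu_top

/-- The energy `w² / 2 - F(u)`, where `F' = a`, has derivative `b(u) w²` and equal limits
at both ends of the orbit. -/
theorem exists_damping_nonpos (h : IsHomoclinic a b p u w) {F : ℝ → ℝ}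
    (hF : ∀ z, HasDerivAt F (a (u z)) (u z)) (hFp : ContinuousAt F p) : ∃ z, b (u z) ≤ 0 := by
  obtain ⟨hu_bot, hu_top, hw_bot, hw_top, -⟩ := h.ho
  by_contra! hb
  have henergy (z) : HasDerivAt (fun z ↦ w z ^ 2 / 2 - F (u z)) (b (u z) * w z ^ 2) z :=
    ((((h.hasDerivAt_snd z).pow 2).div_const 2).sub
      ((hF z).comp z (h.hasDerivAt_fst z))).congr_deriv (by push_cast; ring)
  have hmono : Monotone fun z ↦ w z ^ 2 / 2 - F (u z) :=
    monotone_of_hasDerivAt_nonneg henergy fun z ↦ mul_nonneg (hb z).le (sq_nonneg _)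
  have hconst := funext <| eq_of_monotone_of_tendsto hmono
    (((hw_bot.pow 2).div_const 2).sub (hFp.tendsto.comp hu_bot))
    (((hw_top.pow 2).div_const 2).sub (hFp.tendsto.comp hu_top))
  obtain ⟨z, hz⟩ := h.exists_snd_ne_zero
  have hzero : b (u z) * w z ^ 2 = 0 := by
    have hderiv := henergy z
    rw [hconst] at hderiv
    exact hderiv.unique (hasDerivAt_const z _)
  exact mul_ne_zero (hb z).ne' (pow_ne_zero 2 hz) hzero

theorem exists_damping_eq_zero (h : IsHomoclinic a b p u w) {F : ℝ → ℝ}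
    (hF : ∀ z, HasDerivAt F (a (u z)) (u z)) (hFp : ContinuousAt F p)
    (hb : Continuous fun z ↦ b (u z)) : ∃ z, b (u z) = 0 := by
  obtain ⟨z₁, hz₁⟩ := h.exists_damping_nonpos hF hFp
  obtain ⟨z₂, hz₂⟩ := h.reverse.exists_damping_nonpos (fun z ↦ hF (-z)) hFp
  exact mem_range_of_exists_le_of_exists_ge hb ⟨z₁, hz₁⟩ ⟨-z₂, neg_nonpos.1 hz₂⟩

section Velocity

variable {θ B : ℝ}

/-- Going back in time from `z` to the last moment where `w = θ`, the orbit has `w ≥ θ` and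
hence `dw/du = a/w + b ≤ B/θ + B`. -/
theorem snd_le (h : IsHomoclinic a b p u w) (hθ : 0 < θ) (hB : 0 ≤ B) (hq : ∀ t, q ≤ u t)
    (ha : ∀ x ∈ Icc q (u z), a x ≤ B) (hb : ∀ x ∈ Icc q (u z), b x ≤ B) :
    w z ≤ θ + (B / θ + B) * (u z - q) := by
  have hslope : 0 ≤ B / θ + B := by positivity
  rcases le_total (w z) θ with hwz | hwz
  · exact hwz.trans (le_add_of_nonneg_right (mul_nonneg hslope (sub_nonneg.2 (hq z))))
  obtain ⟨-, -, hw_bot, -, -⟩ := h.ho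
  obtain ⟨t₀, hwt₀, ht₀⟩ :=
    ((hw_bot.eventually_le_const hθ).and (eventually_le_atBot z)).exists
  obtain ⟨s, hs, hws, hge⟩ := exists_last_eq h.continuous_snd ht₀ hwt₀ hwz
  have hu_le : ∀ t ∈ Icc s z, u t ≤ u z := by
    intro t ht
    have hneg := le_of_hasDerivAt_nonpos ht.2 (fun x ↦ (h.hasDerivAt_fst x).neg)
      fun x hx ↦ neg_nonpos.2 (hθ.le.trans (hge x ⟨ht.1.trans hx.1.le, hx.2.le⟩))
    exact neg_le_neg_iff.1 hneg
  have hslope_le : ∀ t ∈ Icc s z, a (u t) + b (u t) * w t ≤ (B / θ + B) * w t := by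
    intro t ht
    have hut : u t ∈ Icc q (u z) := ⟨hq t, hu_le t ht⟩
    have hwt : 0 ≤ w t := hθ.le.trans (hge t ht)
    calc a (u t) + b (u t) * w t ≤ B / θ * θ + B * w t := by
          rw [div_mul_cancel₀ B hθ.ne']
          exact add_le_add (ha _ hut) (mul_le_mul_of_nonneg_right (hb _ hut) hwt)
      _ ≤ B / θ * w t + B * w t := by gcongr; exact hge t ht
      _ = (B / θ + B) * w t := by ring
  have hdecrease : w z - (B / θ + B) * u z ≤ w s - (B / θ + B) * u s :=
    le_of_hasDerivAt_nonpos hs.2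
      (fun x ↦ (h.hasDerivAt_snd x).sub ((h.hasDerivAt_fst x).const_mul _))
      fun x hx ↦ sub_nonpos.2 (hslope_le x (Ioo_subset_Icc_self hx))
  linarith [mul_le_mul_of_nonneg_left (hq s) hslope]

theorem abs_snd_le (h : IsHomoclinic a b p u w) (hθ : 0 < θ) (hB : 0 ≤ B) (hq : ∀ t, q ≤ u t)
    (hab : ∀ x ∈ Icc q (u z), |a x| ≤ B ∧ |b x| ≤ B) :
    |w z| ≤ θ + (B / θ + B) * (u z - q) := by
  have hforward := h.snd_le hθ hB hq (fun x hx ↦ (abs_le.1 (hab x hx).1).2)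
    (fun x hx ↦ (abs_le.1 (hab x hx).2).2)
  have hbackward := h.reverse.snd_le (z := -z) hθ hB (fun t ↦ hq (-t))
    (by simpa using fun x hx₁ hx₂ ↦ (abs_le.1 (hab x ⟨hx₁, hx₂⟩).1).2)
    (by simpa using fun x hx₁ hx₂ ↦ neg_le.1 (abs_le.1 (hab x ⟨hx₁, hx₂⟩).2).1)
  rw [neg_neg] at hbackward
  exact abs_le.2 ⟨neg_le.1 hbackward, hforward⟩

end Velocity

theorem exists_pos_forall_abs_snd_le {σ B : ℝ} (hσ : 0 < σ) (hB : 0 ≤ B) :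
    ∃ ρ > 0, ∀ {a b u w : ℝ → ℝ} {p q z : ℝ}, IsHomoclinic a b p u w → (∀ t, q ≤ u t) →
      u z ≤ q + ρ → (∀ x ∈ Icc q (u z), |a x| ≤ B ∧ |b x| ≤ B) → |w z| ≤ σ := by
  set Q := B / (σ / 2) + B + 1 with hQ
  have hQ_pos : 0 < Q := by positivity
  refine ⟨σ / 2 / Q, by positivity, fun {a b u w p q z} h hq hz hab ↦ ?_⟩
  calc |w z| ≤ σ / 2 + (B / (σ / 2) + B) * (u z - q) := h.abs_snd_le (half_pos hσ) hB hq hab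
    _ ≤ σ / 2 + Q * (σ / 2 / Q) := by
        gcongr
        · linarith [hq z]
        · linarith
        · linarith
    _ = σ := by field_simp; ring

section Excursion

variable {v v₀ v₁ v₂ r σ W : ℝ}

theorem exists_le_forall_le_fst (h : IsHomoclinic a b p u w) (hp : p < v) (hz : v ≤ u z) :
    ∃ s ≤ z, u s = v ∧ ∀ t ∈ Icc s z, v ≤ u t := by
  obtain ⟨hu_bot, -⟩ := h.ho
  obtain ⟨t₀, hut₀, ht₀⟩ :=
    ((hu_bot.eventually_le_const hp).and (eventually_le_atBot z)).exists
  obtain ⟨s, hs, hus, hge⟩ := exists_last_eq h.continuous_fst ht₀ hut₀ hz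
  exact ⟨s, hs.2, hus, hge⟩

theorem exists_excursion (h : IsHomoclinic a b p u w) (hp : p < v) (hz : v ≤ u z) :
    ∃ s ≤ z, ∃ t ≥ z, u s = v ∧ u t = v ∧ ∀ x ∈ Icc s t, v ≤ u x := by
  obtain ⟨s, hsz, hus, hs⟩ := h.exists_le_forall_le_fst hp hz
  obtain ⟨t, htz, hut, ht⟩ := h.reverse.exists_le_forall_le_fst (z := -z) hp (by rwa [neg_neg])
  refine ⟨s, hsz, -t, le_neg.1 htz, hus, hut, fun x hx ↦ ?_⟩
  rcases le_total x z with hxz | hxz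
  · exact hs x ⟨hx.1, hxz⟩
  · simpa using ht (-x) ⟨le_neg.1 hx.2, neg_le_neg hxz⟩

/-- With `G' = b`, the quantity `y = w - G(u)` has derivative `a(u)`. During an excursion of `u`
above `v₀` it therefore never increases, and its total loss is at most `2 σ` because `G(u)` is the
same at both ends. Crossing `[v₁, v₂]` at speed at most `W` takes a time at least `(v₂ - v₁) / W`,
during which `y` loses at least `r` per unit of time. -/
theorem mul_sub_le_of_excursion (h : IsHomoclinic a b p u w)
    (hG : ∀ z, HasDerivAt G (b (u z)) (u z)) (hp : p < v₀) (h₀₁ : v₀ ≤ v₁) (h₁₂ : v₁ ≤ v₂)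
    (hr : 0 ≤ r) (hW : 0 ≤ W) (ha : ∀ z, v₀ ≤ u z → a (u z) ≤ 0)
    (har : ∀ x ∈ Icc v₁ v₂, a x ≤ -r) (hwσ : ∀ z, u z = v₀ → |w z| ≤ σ)
    (hwW : ∀ z, u z ∈ Icc v₁ v₂ → w z ≤ W) (hz : v₂ ≤ u z) :
    r * (v₂ - v₁) ≤ 2 * σ * W := by
  obtain ⟨α, hαz, β, hβz, huα, huβ, habove⟩ :=
    h.exists_excursion hp ((h₀₁.trans h₁₂).trans hz)
  obtain ⟨s, hs, t, ht, hus, hut, hcross⟩ :=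
    exists_Icc_mapsTo_Icc h.continuous_fst hαz h₁₂ (huα.trans_le h₀₁) hz
  have hy (x) : HasDerivAt (fun z ↦ w z - G (u z)) (a (u x)) x :=
    ((h.hasDerivAt_snd x).sub ((hG x).comp x (h.hasDerivAt_fst x))).congr_deriv (by ring)
  have hbefore : w s - G (u s) ≤ w α - G (u α) := le_of_hasDerivAt_nonpos hs.1 hy
    fun x hx ↦ ha x (habove x ⟨hx.1.le, by linarith [hx.2, hs.2]⟩)
  have hduring : (w t - G (u t)) - (w s - G (u s)) ≤ -r * (t - s) :=
    sub_le_mul_sub_of_hasDerivAt ht.1 hy fun x hx ↦ har _ (hcross (Ioo_subset_Icc_self hx))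
  have hafter : w β - G (u β) ≤ w t - G (u t) := le_of_hasDerivAt_nonpos (ht.2.trans hβz) hy
    fun x hx ↦ ha x (habove x ⟨by linarith [hx.1, ht.1, hs.1], hx.2.le⟩)
  have htime : v₂ - v₁ ≤ W * (t - s) := by
    rw [← hus, ← hut]
    exact sub_le_mul_sub_of_hasDerivAt ht.1 h.hasDerivAt_fst
      fun x hx ↦ hwW x (hcross (Ioo_subset_Icc_self hx))
  have hloss : r * (t - s) ≤ 2 * σ := by
    rw [huα] at hbefore
    rw [huβ] at hafter
    linarith [le_of_abs_le (hwσ α huα), neg_le_of_abs_le (hwσ β huβ)]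
  calc r * (v₂ - v₁) ≤ r * (W * (t - s)) := mul_le_mul_of_nonneg_left htime hr
    _ = r * (t - s) * W := by ring
    _ ≤ 2 * σ * W := mul_le_mul_of_nonneg_right hloss hW

end Excursion

end IsHomoclinic

end Homoclinic

/-- `φ` is N-shaped on `J`: increasing up to its peak `m`, decreasing from there down to its
trough `n`, and increasing beyond it. -/
structure NShaped (φ : ℝ → ℝ) (J : Set ℝ) (m n : ℝ) : Prop where
  peak_lt_trough : m < n
  strictMonoOn_left : StrictMonoOn φ (J ∩ Iic m)
  strictAntiOn_mid : StrictAntiOn φ (J ∩ Icc m n)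
  strictMonoOn_right : StrictMonoOn φ (J ∩ Ici n)

namespace NShaped

variable {φ : ℝ → ℝ} {J J' : Set ℝ} {m n x y z : ℝ}

theorem mono (h : NShaped φ J m n) (hJ : J' ⊆ J) : NShaped φ J' m n where
  peak_lt_trough := h.peak_lt_trough
  strictMonoOn_left := h.strictMonoOn_left.mono (inter_subset_inter_left _ hJ)
  strictAntiOn_mid := h.strictAntiOn_mid.mono (inter_subset_inter_left _ hJ)
  strictMonoOn_right := h.strictMonoOn_right.mono (inter_subset_inter_left _ hJ)

theorem reflect (h : NShaped φ J m n) :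
    NShaped (fun x ↦ -φ (-x)) (Neg.neg ⁻¹' J) (-n) (-m) where
  peak_lt_trough := neg_lt_neg h.peak_lt_trough
  strictMonoOn_left _ hx _ hy hxy := neg_lt_neg <| h.strictMonoOn_right
    ⟨hy.1, mem_Ici.2 (le_neg.1 hy.2)⟩ ⟨hx.1, mem_Ici.2 (le_neg.1 hx.2)⟩ (neg_lt_neg hxy)
  strictAntiOn_mid _ hx _ hy hxy := neg_lt_neg <| h.strictAntiOn_mid
    ⟨hy.1, le_neg.1 hy.2.2, neg_le.1 hy.2.1⟩ ⟨hx.1, le_neg.1 hx.2.2, neg_le.1 hx.2.1⟩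
    (neg_lt_neg hxy)
  strictMonoOn_right _ hx _ hy hxy := neg_lt_neg <| h.strictMonoOn_left
    ⟨hy.1, mem_Iic.2 (neg_le.1 hy.2)⟩ ⟨hx.1, mem_Iic.2 (neg_le.1 hx.2)⟩ (neg_lt_neg hxy)

theorem trough_lt_of_peak_le (h : NShaped φ J m n) (hx : x ∈ J) (hy : y ∈ J) (hmx : m ≤ x)
    (hxy : x < y) (heq : φ x = φ y) : n < y := by
  by_contra! hyn
  exact (h.strictAntiOn_mid ⟨hx, hmx, hxy.le.trans hyn⟩ ⟨hy, hmx.trans hxy.le, hyn⟩ hxy).ne'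
    heq

theorem lt_peak_of_eq_of_eq (h : NShaped φ J m n) (hx : x ∈ J) (hy : y ∈ J) (hz : z ∈ J)
    (hxy : x < y) (hyz : y < z) (heq₁ : φ x = φ y) (heq₂ : φ y = φ z) : x < m := by
  by_contra! hmx
  have hny : n < y := h.trough_lt_of_peak_le hx hy hmx hxy heq₁
  exact (h.strictMonoOn_right ⟨hy, hny.le⟩ ⟨hz, (hny.trans hyz).le⟩ hyz).ne heq₂

theorem trough_lt_of_eq_of_eq (h : NShaped φ J m n) (hx : x ∈ J) (hy : y ∈ J) (hz : z ∈ J)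
    (hxy : x < y) (hyz : y < z) (heq₁ : φ x = φ y) (heq₂ : φ y = φ z) : n < z :=
  neg_lt_neg_iff.1 <| h.reflect.lt_peak_of_eq_of_eq (x := -z) (y := -y) (z := -x)
    (by simpa) (by simpa) (by simpa) (neg_lt_neg hyz) (neg_lt_neg hxy)
    (by simpa using heq₂.symm) (by simpa using heq₁.symm)

end NShaped

/-- The data of the planar systems `u' = w`, `w' = g₁(u) (φ(u) - c) + g₂(u) (d(u) + μ) w` with
parameters `c` and `μ`, on an open interval of values of `u`, where `φ` is N-shaped. In the
intended examples `d` is proportional to `φ'`; only its vanishing at the peak and at the trough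
matters. -/
structure BistableFamily where
  domain : Set ℝ
  (g₁ g₂ φ d : ℝ → ℝ)
  (peak trough : ℝ)
  isOpen_domain : IsOpen domain
  ordConnected_domain : domain.OrdConnected
  peak_mem : peak ∈ domain
  trough_mem : trough ∈ domain
  continuousOn_g₁ : ContinuousOn g₁ domain
  continuousOn_g₂ : ContinuousOn g₂ domain
  continuousOn_φ : ContinuousOn φ domain
  continuousOn_d : ContinuousOn d domain
  g₁_pos : ∀ x ∈ domain, 0 < g₁ x
  g₂_pos : ∀ x ∈ domain, 0 < g₂ x
  exists_abs_d_le : ∃ M, ∀ x ∈ domain, |d x| ≤ M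
  d_peak : d peak = 0
  d_trough : d trough = 0
  nShaped : NShaped φ domain peak trough

namespace BistableFamily

variable (S : BistableFamily) {c μ p v : ℝ} {u w : ℝ → ℝ}

/-- The coefficient `g₁(x) (φ(x) - c)`, independent of `w`, in the equation for `w'`. -/
def force (c x : ℝ) : ℝ := S.g₁ x * (S.φ x - c)

/-- The coefficient `g₂(x) (d(x) + μ)` of `w` in the equation for `w'`. -/
def damping (μ x : ℝ) : ℝ := S.g₂ x * (S.d x + μ)

/-- The family satisfied by `-u`; it exchanges the peak and the trough. -/
def reflect : BistableFamily where
  domain := Neg.neg ⁻¹' S.domain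
  g₁ x := S.g₁ (-x)
  g₂ x := S.g₂ (-x)
  φ x := -S.φ (-x)
  d x := S.d (-x)
  peak := -S.trough
  trough := -S.peak
  isOpen_domain := S.isOpen_domain.preimage continuous_neg
  ordConnected_domain := S.ordConnected_domain.preimage_anti fun _ _ ↦ neg_le_neg
  peak_mem := by simpa using S.trough_mem
  trough_mem := by simpa using S.peak_mem
  continuousOn_g₁ := S.continuousOn_g₁.comp continuousOn_neg (mapsTo_preimage _ _)
  continuousOn_g₂ := S.continuousOn_g₂.comp continuousOn_neg (mapsTo_preimage _ _)
  continuousOn_φ := (S.continuousOn_φ.comp continuousOn_neg (mapsTo_preimage _ _)).neg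
  continuousOn_d := S.continuousOn_d.comp continuousOn_neg (mapsTo_preimage _ _)
  g₁_pos x hx := S.g₁_pos (-x) hx
  g₂_pos x hx := S.g₂_pos (-x) hx
  exists_abs_d_le := S.exists_abs_d_le.imp fun _ hM x hx ↦ hM (-x) hx
  d_peak := by simpa using S.d_trough
  d_trough := by simpa using S.d_peak
  nShaped := S.nShaped.reflect

theorem continuousOn_force (c : ℝ) : ContinuousOn (S.force c) S.domain :=
  S.continuousOn_g₁.mul (S.continuousOn_φ.sub continuousOn_const)

theorem continuousOn_damping (μ : ℝ) : ContinuousOn (S.damping μ) S.domain :=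
  S.continuousOn_g₂.mul (S.continuousOn_d.add continuousOn_const)

theorem exists_force_le_neg {v₁ v₂ : ℝ} (hv₁ : S.peak < v₁) (hv₂ : v₂ ≤ S.trough) :
    ∃ r > 0, ∀ᶠ c in nhds (S.φ S.peak), ∀ x ∈ Icc v₁ v₂, S.force c x ≤ -r := by
  have hmid : Icc v₁ v₂ ⊆ Icc S.peak S.trough := Icc_subset_Icc hv₁.le hv₂
  have hsub : Icc v₁ v₂ ⊆ S.domain :=
    hmid.trans (S.ordConnected_domain.out S.peak_mem S.trough_mem)
  rcases lt_or_ge v₂ v₁ with hlt | hle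
  · exact ⟨1, one_pos, .of_forall fun c x hx ↦ absurd (hx.1.trans hx.2) hlt.not_ge⟩
  obtain ⟨x₀, hx₀, hmin⟩ := isCompact_Icc.exists_isMinOn (nonempty_Icc.2 hle)
    (S.continuousOn_g₁.mono hsub)
  have hdrop : S.φ v₁ < S.φ S.peak := S.nShaped.strictAntiOn_mid
    ⟨S.peak_mem, le_rfl, S.nShaped.peak_lt_trough.le⟩
    ⟨hsub (left_mem_Icc.2 hle), hmid (left_mem_Icc.2 hle)⟩ hv₁
  obtain ⟨s, hs₁, hs₂⟩ := exists_between hdrop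
  refine ⟨S.g₁ x₀ * (s - S.φ v₁), mul_pos (S.g₁_pos x₀ (hsub hx₀)) (sub_pos.2 hs₁), ?_⟩
  filter_upwards [lt_mem_nhds hs₂] with c hc x hx
  have hφ : S.φ x ≤ S.φ v₁ := S.nShaped.strictAntiOn_mid.antitoneOn
    ⟨hsub (left_mem_Icc.2 hle), hmid (left_mem_Icc.2 hle)⟩ ⟨hsub hx, hmid hx⟩ hx.1
  have hg : S.g₁ x₀ * (s - S.φ v₁) ≤ S.g₁ x * (c - S.φ x) :=
    mul_le_mul (hmin hx) (by linarith) (by linarith) (S.g₁_pos x (hsub hx)).le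
  rw [force]
  linarith

/-- `(u, w)` is a homoclinic orbit of the system with parameters `c`, `μ` whose values of `u`
stay in the domain, and whose rest point `p` is at level `c` of `φ`. -/
structure IsPulse (S : BistableFamily) (c μ p : ℝ) (u w : ℝ → ℝ) : Prop
    extends IsHomoclinic (S.force c) (S.damping μ) p u w where
  fst_mem : ∀ z, u z ∈ S.domain
  level_mem : p ∈ S.domain
  φ_level : S.φ p = c

variable {S}

namespace IsPulse

theorem reflect (h : S.IsPulse c μ p u w) :
    S.reflect.IsPulse (-c) μ (-p) (fun z ↦ -u z) (fun z ↦ -w z) where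
  hasDerivAt_fst := h.toIsHomoclinic.reflect.hasDerivAt_fst
  hasDerivAt_snd z := (h.toIsHomoclinic.reflect.hasDerivAt_snd z).congr_deriv <| by
    simp only [force, damping, BistableFamily.reflect]; ring
  ho := h.ho.reflect
  fst_mem z := by simpa [BistableFamily.reflect] using h.fst_mem z
  level_mem := by simpa [BistableFamily.reflect] using h.level_mem
  φ_level := by simpa [BistableFamily.reflect] using h.φ_level

theorem le_fst (h : S.IsPulse c μ p u w) (hp : p < S.peak) (z : ℝ) : p ≤ u z := by
  by_contra! hz
  obtain ⟨z₀, hmin, hforce⟩ := h.exists_forall_fst_le hz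
  have hlt : u z₀ < p := (hmin z).trans_lt hz
  have hc : c ≤ S.φ (u z₀) :=
    sub_nonneg.1 (nonneg_of_mul_nonneg_right hforce (S.g₁_pos _ (h.fst_mem z₀)))
  have hφ : S.φ (u z₀) < S.φ p := S.nShaped.strictMonoOn_left
    ⟨h.fst_mem z₀, (hlt.trans hp).le⟩ ⟨h.level_mem, hp.le⟩ hlt
  exact (hφ.trans_le h.φ_level.le).not_ge hc

theorem force_nonpos (h : S.IsPulse c μ p u w) (hp : p < S.peak) (hv : S.peak ≤ v)
    (hvc : S.φ v ≤ c) {z : ℝ} (hz : v ≤ u z) : S.force c (u z) ≤ 0 := by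
  have hmem := h.fst_mem
  refine mul_nonpos_of_nonneg_of_nonpos (S.g₁_pos _ (hmem z)).le (sub_nonpos.2 ?_)
  rcases le_total (u z) S.trough with hle | hge
  · have hv_mem : v ∈ S.domain := S.ordConnected_domain.out S.peak_mem (hmem z) ⟨hv, hz⟩
    exact (S.nShaped.strictAntiOn_mid.antitoneOn ⟨hv_mem, hv, hz.trans hle⟩
      ⟨hmem z, hv.trans hz, hle⟩ hz).trans hvc
  · obtain ⟨z₀, hmax, hforce⟩ := h.exists_forall_le_fst (hp.trans_le (hv.trans hz))
    have hc : S.φ (u z₀) ≤ c :=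
      sub_nonpos.1 (nonpos_of_mul_nonpos_right hforce (S.g₁_pos _ (hmem z₀)))
    exact (S.nShaped.strictMonoOn_right.monotoneOn ⟨hmem z, hge⟩
      ⟨hmem z₀, hge.trans (hmax z)⟩ (hmax z)).trans hc

theorem exists_eq_neg_d (h : S.IsPulse c μ p u w) : ∃ z, μ = -S.d (u z) := by
  obtain ⟨F, hF⟩ := exists_hasDerivAt_of_continuousOn S.isOpen_domain S.ordConnected_domain
    (S.continuousOn_force c)
  obtain ⟨z, hz⟩ := h.exists_damping_eq_zero (fun z ↦ hF _ (h.fst_mem z))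
    (hF p h.level_mem).continuousAt
    ((S.continuousOn_damping μ).comp_continuous h.continuous_fst h.fst_mem)
  have hd := (mul_eq_zero.1 hz).resolve_left (S.g₂_pos _ (h.fst_mem z)).ne'
  exact ⟨z, eq_neg_of_add_eq_zero_right hd⟩

end IsPulse

theorem exists_eventually_abs_coeff_le {A : Set ℝ} (hA : IsCompact A) (hAS : A ⊆ S.domain)
    (c₀ : ℝ) : ∃ B ≥ 0, ∀ᶠ c in nhds c₀, ∀ {μ p u w}, S.IsPulse c μ p u w →
      ∀ x ∈ A, |S.force c x| ≤ B ∧ |S.damping μ x| ≤ B := by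
  obtain ⟨M, hM⟩ := S.exists_abs_d_le
  have hfst (T : Set ℝ) : MapsTo Prod.fst (A ×ˢ T) S.domain := fun y hy ↦ hAS hy.1
  obtain ⟨B₁, hB₁⟩ := (hA.prod (isCompact_closedBall c₀ 1)).exists_bound_of_continuousOn
    ((S.continuousOn_g₁.comp continuousOn_fst (hfst _)).mul
      ((S.continuousOn_φ.comp continuousOn_fst (hfst _)).sub continuousOn_snd))
  obtain ⟨B₂, hB₂⟩ := (hA.prod (isCompact_closedBall (0 : ℝ) M)).exists_bound_of_continuousOn
    ((S.continuousOn_g₂.comp continuousOn_fst (hfst _)).mul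
      ((S.continuousOn_d.comp continuousOn_fst (hfst _)).add continuousOn_snd))
  refine ⟨max 0 (max B₁ B₂), le_max_left _ _, ?_⟩
  filter_upwards [Metric.closedBall_mem_nhds c₀ one_pos] with c hc μ p u w h x hx
  obtain ⟨z, rfl⟩ := h.exists_eq_neg_d
  have hμ : -S.d (u z) ∈ Metric.closedBall (0 : ℝ) M := by
    simpa [Real.dist_eq] using hM _ (h.fst_mem z)
  exact ⟨(hB₁ (x, c) ⟨hx, hc⟩).trans ((le_max_left _ _).trans (le_max_right _ _)),
    (hB₂ (x, _) ⟨hx, hμ⟩).trans ((le_max_right _ _).trans (le_max_right _ _))⟩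

theorem eventually_peak_sub_lt_fst {ρ : ℝ} (hρ : 0 < ρ) (hmem : S.peak - ρ ∈ S.domain) :
    ∀ᶠ c in nhds (S.φ S.peak), ∀ {μ p u w}, S.IsPulse c μ p u w → p < S.peak →
      ∀ z, S.peak - ρ < u z := by
  have hlt : S.peak - ρ < S.peak := sub_lt_self _ hρ
  have hφ : S.φ (S.peak - ρ) < S.φ S.peak := S.nShaped.strictMonoOn_left
    ⟨hmem, hlt.le⟩ ⟨S.peak_mem, mem_Iic.2 le_rfl⟩ hlt
  filter_upwards [lt_mem_nhds hφ] with c hc μ p u w h hp z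
  rw [← h.φ_level] at hc
  have hlevel : S.peak - ρ < p :=
    (S.nShaped.strictMonoOn_left.lt_iff_lt ⟨hmem, hlt.le⟩ ⟨h.level_mem, hp.le⟩).1 hc
  exact hlevel.trans_le (h.le_fst hp z)

theorem exists_pos_eventually_abs_snd_le (S : BistableFamily) {σ : ℝ} (hσ : 0 < σ) :
    ∃ ρ > 0, ∀ᶠ c in nhds (S.φ S.peak), ∀ {μ p u w}, S.IsPulse c μ p u w → p < S.peak →
      ∀ z, u z ≤ S.peak + ρ → |w z| ≤ σ := by
  obtain ⟨η, hη, hdom⟩ := (nhds_basis_Icc_pos S.peak).mem_iff.1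
    (S.isOpen_domain.mem_nhds S.peak_mem)
  obtain ⟨B, hB, hbound⟩ := exists_eventually_abs_coeff_le isCompact_Icc hdom (S.φ S.peak)
  obtain ⟨ρ', hρ', hslow⟩ := IsHomoclinic.exists_pos_forall_abs_snd_le hσ hB
  set ρ := min η (ρ' / 2)
  have hρ : 0 < ρ := lt_min hη (half_pos hρ')
  have hρη : ρ ≤ η := min_le_left _ _
  have hρρ' : ρ ≤ ρ' / 2 := min_le_right _ _
  refine ⟨ρ, hρ, ?_⟩
  filter_upwards [hbound, eventually_peak_sub_lt_fst hρ (hdom ⟨by linarith, by linarith⟩)]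
    with c hbound hlow μ p u w h hp z hz
  exact hslow h.toIsHomoclinic (fun t ↦ (hlow h hp t).le) (by linarith)
    fun x hx ↦ hbound h x ⟨by linarith [hx.1], by linarith [hx.2]⟩

theorem eventually_fst_lt_peak_add {η : ℝ} (hη : 0 < η)
    (hdom : Icc (S.peak - η) (S.peak + η) ⊆ S.domain) (htrough : S.peak + η ≤ S.trough) :
    ∀ᶠ c in nhds (S.φ S.peak), ∀ {μ p u w}, S.IsPulse c μ p u w → p < S.peak →
      ∀ z, u z < S.peak + η := by
  obtain ⟨B, hB, hbound⟩ := exists_eventually_abs_coeff_le isCompact_Icc hdom (S.φ S.peak)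
  obtain ⟨r, hr, hforce⟩ :=
    S.exists_force_le_neg (lt_add_of_pos_right _ (half_pos hη)) htrough
  set W := 1 + (B / 1 + B) * (2 * η) with hW
  have hW_pos : 0 < W := by positivity
  obtain ⟨ρ', hρ', hslow⟩ :=
    S.exists_pos_eventually_abs_snd_le (σ := r * η / (8 * W)) (by positivity)
  set ρ := min ρ' (η / 2)
  have hρ : 0 < ρ := lt_min hρ' (half_pos hη)
  have hρρ' : ρ ≤ ρ' := min_le_left _ _
  have hρη : ρ ≤ η / 2 := min_le_right _ _
  have hdrop : S.φ (S.peak + ρ) < S.φ S.peak := S.nShaped.strictAntiOn_mid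
    ⟨S.peak_mem, le_rfl, S.nShaped.peak_lt_trough.le⟩
    ⟨hdom ⟨by linarith, by linarith⟩, by linarith, by linarith⟩ (lt_add_of_pos_right _ hρ)
  filter_upwards [hbound, hforce, hslow, lt_mem_nhds hdrop,
    eventually_peak_sub_lt_fst hη (hdom ⟨le_rfl, by linarith⟩)]
    with c hbound hforce hslow hdrop hlow μ p u w h hp z
  by_contra! hz
  obtain ⟨G, hG⟩ := exists_hasDerivAt_of_continuousOn S.isOpen_domain S.ordConnected_domain
    (S.continuousOn_damping μ)
  have hfast (t) (ht : u t ∈ Icc (S.peak + η / 2) (S.peak + η)) : w t ≤ W :=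
    calc w t ≤ |w t| := le_abs_self _
      _ ≤ 1 + (B / 1 + B) * (u t - (S.peak - η)) :=
          h.abs_snd_le one_pos hB (fun x ↦ (hlow h hp x).le)
            fun x hx ↦ hbound h x ⟨hx.1, hx.2.trans ht.2⟩
      _ ≤ W := by rw [hW]; gcongr; linarith [ht.2]
  have hloss := h.mul_sub_le_of_excursion (fun z ↦ hG _ (h.fst_mem z))
    (hp.trans (lt_add_of_pos_right _ hρ)) (by linarith) (by linarith) hr.le hW_pos.le
    (fun t ht ↦ h.force_nonpos hp (by linarith) hdrop.le ht) hforce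
    (fun t ht ↦ hslow h hp t (by linarith)) hfast hz
  have hσW : 2 * (r * η / (8 * W)) * W = r * η / 4 := by field_simp; norm_num
  linarith [mul_pos hr hη]

theorem eventually_near_peak (S : BistableFamily) {ε : ℝ} (hε : 0 < ε) :
    ∀ᶠ c in nhds (S.φ S.peak), ∀ {μ p u w}, S.IsPulse c μ p u w → p < S.peak →
      |μ| < ε ∧ ∀ z, √((u z - S.peak) ^ 2 + (w z) ^ 2) < ε := by
  have hdom : S.domain ∈ nhds S.peak := S.isOpen_domain.mem_nhds S.peak_mem
  obtain ⟨ρ, hρ, hslow⟩ := S.exists_pos_eventually_abs_snd_le (half_pos hε)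
  have hd : ∀ᶠ x in nhds S.peak, |S.d x| < ε :=
    (S.continuousOn_d.continuousAt hdom).abs.eventually_lt_const
      (by simpa only [S.d_peak, abs_zero] using hε)
  have hnear : ∀ᶠ x in nhds S.peak, x < S.trough ∧ x < S.peak + ρ ∧ x < S.peak + ε / 2 :=
    (eventually_lt_nhds S.nShaped.peak_lt_trough).and <|
      (eventually_lt_nhds (lt_add_of_pos_right _ hρ)).and
        (eventually_lt_nhds (lt_add_of_pos_right _ (half_pos hε)))
  obtain ⟨η, hη, hη_near⟩ := (nhds_basis_Icc_pos S.peak).eventually_iff.1 <|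
    (eventually_mem_set.2 hdom).and (hd.and hnear)
  have hη_dom : Icc (S.peak - η) (S.peak + η) ⊆ S.domain := fun x hx ↦ (hη_near hx).1
  obtain ⟨-, -, hη_trough, hηρ, hηε⟩ := hη_near (right_mem_Icc.2 (by linarith))
  filter_upwards [hslow, eventually_peak_sub_lt_fst hη (hη_dom ⟨le_rfl, by linarith⟩),
    eventually_fst_lt_peak_add hη hη_dom hη_trough.le] with c hslow hlow hhigh μ p u w h hp
  constructor
  · obtain ⟨z, rfl⟩ := h.exists_eq_neg_d
    simpa only [abs_neg] using (hη_near ⟨(hlow h hp z).le, (hhigh h hp z).le⟩).2.1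
  · intro z
    have hu : |u z - S.peak| ≤ ε / 2 :=
      abs_le.2 ⟨by linarith [hlow h hp z], by linarith [hhigh h hp z]⟩
    have hw : |w z| ≤ ε / 2 := hslow h hp z ((hhigh h hp z).trans hηρ).le
    rw [Real.sqrt_lt' hε]
    calc (u z - S.peak) ^ 2 + w z ^ 2 ≤ (ε / 2) ^ 2 + (ε / 2) ^ 2 :=
          add_le_add (sq_le_sq.2 (hu.trans (le_abs_self _))) (sq_le_sq.2 (hw.trans (le_abs_self _)))
      _ < ε ^ 2 := by nlinarith

theorem eventually_near_trough (S : BistableFamily) {ε : ℝ} (hε : 0 < ε) :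
    ∀ᶠ c in nhds (S.φ S.trough), ∀ {μ p u w}, S.IsPulse c μ p u w → S.trough < p →
      |μ| < ε ∧ ∀ z, √((u z - S.trough) ^ 2 + (w z) ^ 2) < ε := by
  have hlevel : S.reflect.φ S.reflect.peak = -S.φ S.trough := by simp [reflect]
  have hnear := S.reflect.eventually_near_peak hε
  rw [hlevel] at hnear
  filter_upwards [continuous_neg.continuousAt.eventually hnear] with c hc μ p u w h hp
  refine (hc h.reflect (neg_lt_neg hp)).imp_right fun hsqrt z ↦ ?_
  have hsq : (-u z - S.reflect.peak) ^ 2 + (-w z) ^ 2 = (u z - S.trough) ^ 2 + w z ^ 2 := by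
    simp only [reflect]
    ring
  simpa only [hsq] using hsqrt z

end BistableFamily

section TrafficFlow

variable {V V' V'' κ uMx umx : ℝ → ℝ} {UM τ K : ℝ}

/-- The flux `u ↦ K u - V(u)` of the traffic model: its critical values are `c_M(K)` and `c_m(K)`,
and the zeros of `f` are the points where it takes the value `c`. -/
def flux (V : ℝ → ℝ) (K u : ℝ) : ℝ := K * u - V u

theorem fTV_eq_zero_iff (hK : K ≠ 0) {c x : ℝ} : fTV V K c x = 0 ↔ flux V K x = c := by
  rw [fTV, div_eq_zero_iff, or_iff_left hK, sub_eq_zero, flux]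

namespace A1

theorem UM_pos (h : A1 V V' V'' UM) : 0 < UM := h.2.2.2.2.2.2.2.1

theorem deriv_le (h : A1 V V' V'' UM) {x : ℝ} (hx : 0 < x) : V' x ≤ V' UM :=
  h.2.2.2.2.2.2.2.2.1 x hx

theorem deriv_pos (h : A1 V V' V'' UM) {x : ℝ} (hx : 0 < x) : 0 < V' x := h.2.2.2.2.1 x hx

theorem pos_of_deriv_zero_lt (h : A1 V V' V'' UM) (hK0 : V' 0 < K) : 0 < K := by
  have hright : Tendsto V' (nhdsWithin 0 (Ioi 0)) (nhds (V' 0)) :=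
    (h.2.1 0 self_mem_Ici).mono_left (nhdsWithin_mono 0 Ioi_subset_Ici_self)
  have hnonneg : 0 ≤ V' 0 :=
    ge_of_tendsto hright <| eventually_mem_nhdsWithin.mono fun x hx ↦ (h.deriv_pos hx).le
  exact hnonneg.trans_lt hK0

theorem strictMonoOn_or_strictAntiOn_deriv (h : A1 V V' V'' UM) {D : Set ℝ} (hD : Convex ℝ D)
    (hsub : D ⊆ Ici 0) (hUM : UM ∉ interior D) : StrictMonoOn V' D ∨ StrictAntiOn V' D := by
  obtain ⟨-, hcont, hderiv, -, -, -, -, -, -, hzero⟩ := h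
  have hpos : interior D ⊆ Ioi 0 := (interior_mono hsub).trans_eq interior_Ici
  exact strictMonoOn_or_strictAntiOn_of_hasDerivAt_ne_zero hD (hcont.mono hsub)
    (fun x hx ↦ hderiv x (hpos hx)) fun x hx h₀ ↦ hUM ((hzero x (hpos hx)).1 h₀ ▸ hx)

theorem strictMonoOn_deriv (h : A1 V V' V'' UM) : StrictMonoOn V' (Icc 0 UM) := by
  have hUM := h.UM_pos
  refine (h.strictMonoOn_or_strictAntiOn_deriv (convex_Icc 0 UM) Icc_subset_Ici_self
    (by simp)).resolve_right fun hanti ↦ ?_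
  exact (hanti ⟨(half_pos hUM).le, (half_lt_self hUM).le⟩ (right_mem_Icc.2 hUM.le)
    (half_lt_self hUM)).not_ge (h.deriv_le (half_pos hUM))

theorem strictAntiOn_deriv (h : A1 V V' V'' UM) : StrictAntiOn V' (Ici UM) := by
  refine (h.strictMonoOn_or_strictAntiOn_deriv (convex_Ici UM) (Ici_subset_Ici.2 h.UM_pos.le)
    (by simp)).resolve_left fun hmono ↦ ?_
  have hlt : UM < UM + 1 := lt_add_one UM
  exact (hmono self_mem_Ici hlt.le hlt).not_ge (h.deriv_le (h.UM_pos.trans hlt))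

theorem continuousOn_flux (h : A1 V V' V'' UM) : ContinuousOn (flux V K) (Ici 0) :=
  (continuousOn_const.mul continuousOn_id).sub
    fun x hx ↦ (h.1 x hx).continuousWithinAt

theorem hasDerivAt_flux (h : A1 V V' V'' UM) {x : ℝ} (hx : 0 < x) :
    HasDerivAt (flux V K) (K - V' x) x := by
  have hV : HasDerivAt V (V' x) x := (h.1 x hx.le).hasDerivAt (Ici_mem_nhds hx)
  exact (hasDerivAt_const_mul K).sub hV

theorem strictMonoOn_flux (h : A1 V V' V'' UM) {D : Set ℝ} (hD : Convex ℝ D)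
    (hsub : D ⊆ Ici 0) (hlt : ∀ x ∈ interior D, V' x < K) : StrictMonoOn (flux V K) D :=
  strictMonoOn_of_hasDerivWithinAt_pos hD (h.continuousOn_flux.mono hsub)
    (fun _ hx ↦ (h.hasDerivAt_flux (interior_Ici.subset (interior_mono hsub hx))).hasDerivWithinAt)
    fun x hx ↦ sub_pos.2 (hlt x hx)

theorem strictAntiOn_flux (h : A1 V V' V'' UM) {D : Set ℝ} (hD : Convex ℝ D)
    (hsub : D ⊆ Ici 0) (hlt : ∀ x ∈ interior D, K < V' x) : StrictAntiOn (flux V K) D :=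
  strictAntiOn_of_hasDerivWithinAt_neg hD (h.continuousOn_flux.mono hsub)
    (fun _ hx ↦ (h.hasDerivAt_flux (interior_Ici.subset (interior_mono hsub hx))).hasDerivWithinAt)
    fun x hx ↦ sub_neg.2 (hlt x hx)

theorem nShaped_flux (h : A1 V V' V'' UM) (huMx : UMaxHyp V' UM uMx) (humx : UMinHyp V' UM umx)
    (hK0 : V' 0 < K) (hKM : K < V' UM) : NShaped (flux V K) (Ici 0) (uMx K) (umx K) := by
  obtain ⟨hm, hKm⟩ := huMx K hK0 hKM
  obtain ⟨hn, hKn⟩ := humx K (h.pos_of_deriv_zero_lt hK0) hKM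
  refine ⟨hm.2.trans hn,
    h.strictMonoOn_flux ((convex_Ici 0).inter (convex_Iic _)) inter_subset_left fun x hx ↦ ?_,
    h.strictAntiOn_flux ((convex_Ici 0).inter (convex_Icc _ _)) inter_subset_left fun x hx ↦ ?_,
    h.strictMonoOn_flux ((convex_Ici 0).inter (convex_Ici _)) inter_subset_left fun x hx ↦ ?_⟩
  · rw [Ici_inter_Iic, interior_Icc] at hx
    exact (h.strictMonoOn_deriv ⟨hx.1.le, (hx.2.trans hm.2).le⟩ ⟨hm.1.le, hm.2.le⟩
      hx.2).trans_eq hKm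
  · rw [interior_inter, interior_Icc] at hx
    obtain ⟨-, hmx, hxn⟩ := hx
    rcases le_total x UM with hxUM | hUMx
    · exact hKm.symm.trans_lt <|
        h.strictMonoOn_deriv ⟨hm.1.le, hm.2.le⟩ ⟨(hm.1.trans hmx).le, hxUM⟩ hmx
    · exact hKn.symm.trans_lt <| h.strictAntiOn_deriv hUMx hn.le hxn
  · rw [interior_inter, interior_Ici, interior_Ici] at hx
    exact (h.strictAntiOn_deriv hn.le (hn.le.trans hx.2.le) hx.2).trans_eq hKn

end A1

theorem g1TV_pos (hκpos : ∀ ρ, 0 < ρ → 0 < κ ρ) (hτ : 0 < τ) {x : ℝ} (hx : 0 < x) :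
    0 < g1TV κ τ x := by
  have hκx := hκpos (1 / x) (by positivity)
  rw [g1TV]
  positivity

theorem g2TV_eq_mul_g1TV (κ : ℝ → ℝ) (τ x : ℝ) : g2TV κ τ x = x / 2 * g1TV κ τ x := by
  rw [g2TV, g1TV, div_mul_div_comm, mul_one, mul_assoc]

theorem continuousOn_g1TV (hκ : ContinuousOn κ (Ioi 0)) (hκpos : ∀ ρ, 0 < ρ → 0 < κ ρ)
    (hτ : 0 < τ) : ContinuousOn (g1TV κ τ) (Ioi 0) := by
  have hinv : ContinuousOn (fun x : ℝ ↦ 1 / x) (Ioi 0) :=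
    continuousOn_const.div continuousOn_id fun x hx ↦ hx.ne'
  have hmaps : MapsTo (fun x : ℝ ↦ 1 / x) (Ioi 0) (Ioi 0) := fun x hx ↦ mem_Ioi.2 (one_div_pos.2 hx)
  exact continuousOn_const.div (continuousOn_const.mul (hκ.comp hinv hmaps))
    fun x hx ↦ (mul_pos hτ (hκpos _ (hmaps hx))).ne'

/-- The traveling-wave system (TV) as a bistable family on `u > 0`: the factor `1 / K` of `f` is
absorbed into `g₁`, so that the level parameter is `c` itself. -/
def trafficFamily (hA1 : A1 V V' V'' UM) (hκ : ContinuousOn κ (Ioi 0))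
    (hκpos : ∀ ρ, 0 < ρ → 0 < κ ρ) (hτ : 0 < τ) (huMx : UMaxHyp V' UM uMx)
    (humx : UMinHyp V' UM umx) (hK0 : V' 0 < K) (hKM : K < V' UM) : BistableFamily where
  domain := Ioi 0
  g₁ x := g1TV κ τ x / K
  g₂ := g2TV κ τ
  φ := flux V K
  d := fdTV V' K
  peak := uMx K
  trough := umx K
  isOpen_domain := isOpen_Ioi
  ordConnected_domain := ordConnected_Ioi
  peak_mem := (huMx K hK0 hKM).1.1
  trough_mem := hA1.UM_pos.trans (humx K (hA1.pos_of_deriv_zero_lt hK0) hKM).1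
  continuousOn_g₁ := (continuousOn_g1TV hκ hκpos hτ).div_const K
  continuousOn_g₂ := ((continuousOn_id.div_const 2).mul (continuousOn_g1TV hκ hκpos hτ)).congr
    fun x _ ↦ g2TV_eq_mul_g1TV κ τ x
  continuousOn_φ := hA1.continuousOn_flux.mono Ioi_subset_Ici_self
  continuousOn_d := (continuousOn_const.sub (hA1.2.1.mono Ioi_subset_Ici_self)).div_const K
  g₁_pos x hx := div_pos (g1TV_pos hκpos hτ hx) (hA1.pos_of_deriv_zero_lt hK0)
  g₂_pos x hx := by
    rw [g2TV_eq_mul_g1TV]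
    exact mul_pos (half_pos hx) (g1TV_pos hκpos hτ hx)
  exists_abs_d_le := ⟨(K + V' UM) / K, fun x hx ↦ by
    have hK := hA1.pos_of_deriv_zero_lt hK0
    have hV'_pos := hA1.deriv_pos hx
    have hV'_le := hA1.deriv_le hx
    rw [fdTV, abs_div, abs_of_pos hK]
    gcongr
    exact abs_le.2 ⟨by linarith, by linarith⟩⟩
  d_peak := by rw [fdTV, (huMx K hK0 hKM).2, sub_self, zero_div]
  d_trough := by
    rw [fdTV, (humx K (hA1.pos_of_deriv_zero_lt hK0) hKM).2, sub_self, zero_div]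
  nShaped := (hA1.nShaped_flux huMx humx hK0 hKM).mono Ioi_subset_Ici_self

theorem IsTVSol.isPulse {cc μ p : ℝ} {u w : ℝ → ℝ} {hA1 : A1 V V' V'' UM}
    {hκ : ContinuousOn κ (Ioi 0)} {hκpos : ∀ ρ, 0 < ρ → 0 < κ ρ} {hτ : 0 < τ}
    {huMx : UMaxHyp V' UM uMx} {humx : UMinHyp V' UM umx} {hK0 : V' 0 < K} {hKM : K < V' UM}
    (h : IsTVSol V V' κ τ K cc μ u w) (hu : ∀ z, 0 < u z) (hp : 0 < p) (hf : fTV V K cc p = 0)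
    (hHO : HO p u w) :
    (trafficFamily hA1 hκ hκpos hτ huMx humx hK0 hKM).IsPulse cc μ p u w where
  hasDerivAt_fst := h.1
  hasDerivAt_snd z := (h.2 z).congr_deriv <| by
    simp only [BistableFamily.force, BistableFamily.damping, trafficFamily, fTV, hTV, flux]
    ring
  ho := hHO
  fst_mem := hu
  level_mem := hp
  φ_level := (fTV_eq_zero_iff (hA1.pos_of_deriv_zero_lt hK0).ne').1 hf

theorem ZerosD1.lt_peak_and_trough_lt {m n cc u₁ u₀ u₂ : ℝ} (h : ZerosD1 V K cc u₁ u₀ u₂)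
    (hK : K ≠ 0) (hV : NShaped (flux V K) (Ici 0) m n) : u₁ < m ∧ n < u₂ := by
  obtain ⟨hu₁, h₁₀, h₀₂, hf₁, hf₀, hf₂, -⟩ := h
  rw [fTV_eq_zero_iff hK] at hf₁ hf₀ hf₂
  have hu₀ : 0 < u₀ := hu₁.trans h₁₀
  have hu₂ : 0 < u₂ := hu₀.trans h₀₂
  have heq₁₀ : flux V K u₁ = flux V K u₀ := hf₁.trans hf₀.symm
  have heq₀₂ : flux V K u₀ = flux V K u₂ := hf₀.trans hf₂.symm
  exact ⟨hV.lt_peak_of_eq_of_eq hu₁.le hu₀.le hu₂.le h₁₀ h₀₂ heq₁₀ heq₀₂,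
    hV.trough_lt_of_eq_of_eq hu₁.le hu₀.le hu₂.le h₁₀ h₀₂ heq₁₀ heq₀₂⟩

theorem ZerosD2.trough_lt {m n cc u₀ u₂ : ℝ} (h : ZerosD2 V K cc u₀ u₂) (hK : K ≠ 0)
    (hV : NShaped (flux V K) (Ici 0) m n) (hcc : cc ≤ c0v V) : n < u₂ := by
  obtain ⟨hu₀, h₀₂, hf₀, hf₂, -⟩ := h
  rw [fTV_eq_zero_iff hK] at hf₀ hf₂
  have hmu₀ : m ≤ u₀ := by
    by_contra! hlt
    have hφ : flux V K 0 < flux V K u₀ := hV.strictMonoOn_left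
      ⟨self_mem_Ici, (hu₀.trans hlt).le⟩ ⟨hu₀.le, hlt.le⟩ hu₀
    have hφ₀ : flux V K 0 = c0v V := by rw [flux, c0v, mul_zero, zero_sub]
    linarith
  exact hV.trough_lt_of_peak_le hu₀.le (hu₀.trans h₀₂).le hmu₀ h₀₂ (hf₀.trans hf₂.symm)

theorem lt_uMx_of_zerosD1 {cc u₁ u₀ u₂ : ℝ} (hA1 : A1 V V' V'' UM) (huMx : UMaxHyp V' UM uMx)
    (humx : UMinHyp V' UM umx) (hK0 : V' 0 < K) (hKM : K < V' UM)
    (hz : ZerosD1 V K cc u₁ u₀ u₂) : u₁ ∈ Ioo 0 (uMx K) ∧ fTV V K cc u₁ = 0 :=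
  ⟨⟨hz.1, (hz.lt_peak_and_trough_lt (hA1.pos_of_deriv_zero_lt hK0).ne'
    (hA1.nShaped_flux huMx humx hK0 hKM)).1⟩, hz.2.2.2.1⟩

theorem umx_lt_of_mem_D1_union_D2 {K₁ cc u₁ u₀ u₂ : ℝ} (hA1 : A1 V V' V'' UM)
    (huMx : UMaxHyp V' UM uMx) (humx : UMinHyp V' UM umx) (hK0 : V' 0 < K) (hKM : K < V' UM)
    (hzD1 : (K, cc) ∈ D1 V V' UM uMx umx → ZerosD1 V K cc u₁ u₀ u₂)
    (hzD2 : (K, cc) ∈ D2 V V' umx K₁ → ZerosD2 V K cc u₀ u₂)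
    (hD : (K, cc) ∈ D1 V V' UM uMx umx ∪ D2 V V' umx K₁) :
    umx K < u₂ ∧ fTV V K cc u₂ = 0 := by
  have hK := (hA1.pos_of_deriv_zero_lt hK0).ne'
  have hV := hA1.nShaped_flux huMx humx hK0 hKM
  rcases hD with hD | hD
  · have hz := hzD1 hD
    exact ⟨(hz.lt_peak_and_trough_lt hK hV).2, hz.2.2.2.2.2.1⟩
  · have hz := hzD2 hD
    have hcc : cc ≤ c0v V := hD.elim (·.2.2.le) (·.2.2.2.le)
    exact ⟨hz.trough_lt hK hV hcc, hz.2.2.2.1⟩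

end TrafficFlow

theorem stmt17_general {V V' V'' κ uMx umx : ℝ → ℝ} {τ UM K : ℝ} (hA1 : A1 V V' V'' UM)
    (hκ : ContinuousOn κ (Ioi 0)) (hκpos : ∀ ρ, 0 < ρ → 0 < κ ρ) (hτ : 0 < τ)
    (huMx : UMaxHyp V' UM uMx) (humx : UMinHyp V' UM umx) (hK0 : V' 0 < K) (hKM : K < V' UM) :
    (∀ ε : ℝ, 0 < ε → ∃ δ : ℝ, 0 < δ ∧ ∀ cc, cMf V uMx K - δ < cc →
      ∀ p, p ∈ Ioo 0 (uMx K) ∧ fTV V K cc p = 0 →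
        ∀ (μ : ℝ) (u w : ℝ → ℝ), IsTVSol V V' κ τ K cc μ u w → (∀ z, 0 < u z) → HO p u w →
          |μ| < ε ∧ ∀ z, Real.sqrt ((u z - uMx K) ^ 2 + (w z) ^ 2) < ε) ∧
    (∀ ε : ℝ, 0 < ε → ∃ δ : ℝ, 0 < δ ∧ ∀ cc, cc < cmf V umx K + δ →
      ∀ p, umx K < p ∧ fTV V K cc p = 0 →
        ∀ (μ : ℝ) (u w : ℝ → ℝ), IsTVSol V V' κ τ K cc μ u w → (∀ z, 0 < u z) → HO p u w →
          |μ| < ε ∧ ∀ z, Real.sqrt ((u z - umx K) ^ 2 + (w z) ^ 2) < ε) := by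
  set S := trafficFamily hA1 hκ hκpos hτ huMx humx hK0 hKM
  refine ⟨fun ε hε ↦ ?_, fun ε hε ↦ ?_⟩
  · obtain ⟨δ, hδ, hnear⟩ := Metric.eventually_nhds_iff.1 (S.eventually_near_peak hε)
    refine ⟨δ, hδ, fun cc hcc p ⟨⟨hp, hpm⟩, hf⟩ μ u w hsol hu hHO ↦ ?_⟩
    have hpulse : S.IsPulse cc μ p u w := hsol.isPulse hu hp hf hHO
    have hlt : S.φ p < S.φ S.peak :=
      S.nShaped.strictMonoOn_left ⟨hp, hpm.le⟩ ⟨S.peak_mem, self_mem_Iic⟩ hpm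
    rw [hpulse.φ_level] at hlt
    exact hnear (abs_sub_lt_iff.2 ⟨by linarith, sub_lt_comm.1 hcc⟩) hpulse hpm
  · obtain ⟨δ, hδ, hnear⟩ := Metric.eventually_nhds_iff.1 (S.eventually_near_trough hε)
    refine ⟨δ, hδ, fun cc hcc p ⟨hnp, hf⟩ μ u w hsol hu hHO ↦ ?_⟩
    have hp : 0 < p := lt_trans S.trough_mem hnp
    have hpulse : S.IsPulse cc μ p u w := hsol.isPulse hu hp hf hHO
    have hlt : S.φ S.trough < S.φ p :=
      S.nShaped.strictMonoOn_right ⟨S.trough_mem, self_mem_Ici⟩ ⟨hp, hnp.le⟩ hnp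
    rw [hpulse.φ_level] at hlt
    exact hnear (abs_sub_lt_iff.2 ⟨sub_lt_iff_lt_add'.2 hcc, by linarith⟩) hpulse hnp

theorem stmt17
    (V V' V'' κ : ℝ → ℝ) (τ UM K K₁ : ℝ) (uMx umx : ℝ → ℝ)
    (u1f u0f u2f : ℝ → ℝ)
    (hA1 : A1 V V' V'' UM) (hA2 : A2 κ) (hτ : 0 < τ)
    (huMx : UMaxHyp V' UM uMx) (humx : UMinHyp V' UM umx)
    (hK1 : K1Hyp V V' UM umx K₁)
    (hK0 : V' 0 < K) (hKM : K < V' UM)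
    (hC : CondC V' κ UM K₁ K)
    (hzD1 : ∀ cc, (K, cc) ∈ D1 V V' UM uMx umx →
      ZerosD1 V K cc (u1f cc) (u0f cc) (u2f cc))
    (hzD2 : ∀ cc, (K, cc) ∈ D2 V V' umx K₁ → ZerosD2 V K cc (u0f cc) (u2f cc)) :
    (∀ ε : ℝ, 0 < ε → ∃ δ : ℝ, 0 < δ ∧
      ∀ cc, cMf V uMx K - δ < cc → cc < cMf V uMx K →
        (K, cc) ∈ D1 V V' UM uMx umx →
        ∀ (μ : ℝ) (u w : ℝ → ℝ), IsTVSol V V' κ τ K cc μ u w → (∀ z, 0 < u z) →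
          HO (u1f cc) u w →
          |μ| < ε ∧ ∀ z, Real.sqrt ((u z - uMx K) ^ 2 + (w z) ^ 2) < ε) ∧
    (∀ ε : ℝ, 0 < ε → ∃ δ : ℝ, 0 < δ ∧
      ∀ cc, cmf V umx K < cc → cc < cmf V umx K + δ →
        (K, cc) ∈ D1 V V' UM uMx umx ∪ D2 V V' umx K₁ →
        ∀ (μ : ℝ) (u w : ℝ → ℝ), IsTVSol V V' κ τ K cc μ u w → (∀ z, 0 < u z) →
          HO (u2f cc) u w →
          |μ| < ε ∧ ∀ z, Real.sqrt ((u z - umx K) ^ 2 + (w z) ^ 2) < ε) := by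
  obtain ⟨hpeak, htrough⟩ := stmt17_general hA1 hA2.1.continuousOn hA2.2 hτ huMx humx hK0 hKM
  exact ⟨fun ε hε ↦ (hpeak ε hε).imp fun δ ↦ And.imp_right fun hnear cc hlo _ hD ↦
      hnear cc hlo _ (lt_uMx_of_zerosD1 hA1 huMx humx hK0 hKM (hzD1 cc hD)),
    fun ε hε ↦ (htrough ε hε).imp fun δ ↦ And.imp_right fun hnear cc _ hhi hD ↦
      hnear cc hhi _ (umx_lt_of_mem_D1_union_D2 hA1 huMx humx hK0 hKM (hzD1 cc) (hzD2 cc) hD)⟩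

end TrafficTW
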